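/- Let ε_1, …, ε_n be independent Rademacher random variables, let T_n = {x ∈ ℝ^n : x_1 ≥ x_2 ≥ … ≥ x_n ≥ 0}, and for x ∈ ℝ^n define α_j(x) = E[ ε_j sgn( Σ_{i=1}^n x_i ε_i ) ], j = 1,…,n. Then α maps T_n into T_n: for every x ∈ T_n, α_1(x) ≥ α_2(x) ≥ … ≥ α_n(x) ≥ 0. -/

import Mathlib

open Finset

/-- The cone `T_n = {x ∈ ℝ^n : x_1 ≥ x_2 ≥ … ≥ x_n ≥ 0}` of nonincreasing
nonnegative sequences. -/
def Tcone (n : ℕ) : Set (Fin n → ℝ) :=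
  {x | (∀ i j : Fin n, i ≤ j → x j ≤ x i) ∧ ∀ i, 0 ≤ x i}

/-- `α_j(x) = E[ε_j sgn(Σ_i x_i ε_i)]` for independent Rademacher signs
(modelled by the uniform measure on `{-1,1}^n`, encoded via `Fin n → Bool`). -/
noncomputable def alph (n : ℕ) (x : Fin n → ℝ) (j : Fin n) : ℝ :=
  (2 ^ n : ℝ)⁻¹ * ∑ s : Fin n → Bool,
    (if s j then (1 : ℝ) else -1) *
      Real.sign (∑ i, x i * (if s i then (1 : ℝ) else -1))

/-!
Write `S(ε) = ∑ i, x i * ε i`. If a bijection `σ` of the sign vectors negates a weight `c` and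
`S(ε) - S(σ ε) = d * c(ε)` with `d ≥ 0`, then averaging over `ε` and `σ ε` gives
`2 ∑ c(ε) f(S(ε)) = ∑ c(ε) (f(S(ε)) - f(S(σ ε)))`, whose terms are all nonnegative for monotone `f`,
such as `sgn`.
Exchanging the signs `i` and `j` negates `c = ε i - ε j` with `d = x i - x j`, which orders the
correlations; flipping the sign `j` negates `c = ε j` with `d = 2 * x j`, which shows that they are
nonnegative.
-/

theorem monotone_real_sign : Monotone Real.sign := by
  intro a b hab
  unfold Real.sign
  split_ifs <;> linarith

section OrderedRing

variable {R Ω : Type*} [Ring R] [LinearOrder R] [IsOrderedRing R] [Fintype Ω]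

theorem mul_map_sub_map_nonneg {f : R → R} (hf : Monotone f) {a b c d : R} (hd : 0 ≤ d)
    (hab : a - b = d * c) : 0 ≤ c * (f a - f b) := by
  rcases le_total 0 c with hc | hc
  · have hba : b ≤ a := sub_nonneg.1 (hab ▸ mul_nonneg hd hc)
    exact mul_nonneg hc (sub_nonneg.2 (hf hba))
  · have hab' : a ≤ b := sub_nonpos.1 (hab ▸ mul_nonpos_of_nonneg_of_nonpos hd hc)
    exact mul_nonneg_of_nonpos_of_nonpos hc (sub_nonpos.2 (hf hab'))

theorem sum_mul_map_nonneg_of_bijective {f : R → R} (hf : Monotone f) {σ : Ω → Ω}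
    (hσ : σ.Bijective) {c S : Ω → R} {d : R} (hd : 0 ≤ d) (hc : ∀ s, c (σ s) = -c s)
    (hS : ∀ s, S s - S (σ s) = d * c s) : 0 ≤ ∑ s, c s * f (S s) := by
  have hsum : ∑ s, c s * f (S s) = -∑ s, c s * f (S (σ s)) := by
    rw [← hσ.sum_comp]
    simp only [hc, neg_mul, sum_neg_distrib]
  have hnonneg : 0 ≤ ∑ s, c s * f (S s) - ∑ s, c s * f (S (σ s)) := by
    simp only [← sum_sub_distrib, ← mul_sub]
    exact sum_nonneg fun s _ => mul_map_sub_map_nonneg hf hd (hS s)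
  rw [sub_eq_add_neg, ← hsum] at hnonneg
  exact nonneg_add_self_iff.1 hnonneg

end OrderedRing

section DotProduct

open Matrix

variable {ι R : Type*} [Fintype ι] [DecidableEq ι]

theorem dotProduct_sub_dotProduct_update [NonUnitalNonAssocRing R] (x y : ι → R) (j : ι) (z : R) :
    x ⬝ᵥ y - x ⬝ᵥ Function.update y j z = x j * (y j - z) := by
  have hsub : y - Function.update y j z = Pi.single j (y j - z) := by
    ext k
    rcases eq_or_ne k j with rfl | hk <;> simp [*]
  rw [← dotProduct_sub, hsub, dotProduct_single]

theorem dotProduct_sub_dotProduct_comp_swap [NonUnitalNonAssocRing R] (x y : ι → R) (i j : ι) :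
    x ⬝ᵥ y - x ⬝ᵥ (y ∘ Equiv.swap i j) = (x i - x j) * (y i - y j) := by
  rcases eq_or_ne i j with rfl | hij
  · simp
  have hj := dotProduct_sub_dotProduct_update x y j (y i)
  have hi := dotProduct_sub_dotProduct_update x (Function.update y j (y i)) i (y j)
  rw [Function.update_of_ne hij] at hi
  rw [Equiv.comp_swap_eq_update, ← sub_add_sub_cancel, hj, hi, ← neg_sub (y i), mul_neg,
    neg_add_eq_sub, sub_mul]

end DotProduct

/-- The sign `±1` encoded by a Boolean, with `true` standing for `1`, as in `alph`. -/
def boolSign (b : Bool) : ℝ :=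
  if b then 1 else -1

theorem boolSign_not (b : Bool) : boolSign (!b) = -boolSign b := by
  cases b <;> simp [boolSign]

section SignCorrelation

open Matrix

variable {ι : Type*} [Fintype ι] [DecidableEq ι]

/-- The correlation `E[ε_j f(∑ i, x_i ε_i)]` of a Rademacher sign with a function of the Rademacher
sum, over an arbitrary finite index type. For `f = Real.sign` it is the paper's `α_j(x)`. -/
noncomputable def signCorrelation (f : ℝ → ℝ) (x : ι → ℝ) (j : ι) : ℝ :=
  (2 ^ Fintype.card ι : ℝ)⁻¹ * ∑ s : ι → Bool, boolSign (s j) * f (x ⬝ᵥ (boolSign ∘ s))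

theorem alph_eq_signCorrelation (n : ℕ) : alph n = signCorrelation Real.sign := by
  ext x j
  simp [alph, signCorrelation, boolSign, dotProduct]

variable {f : ℝ → ℝ} {x : ι → ℝ}

theorem signCorrelation_le_signCorrelation (hf : Monotone f) {i j : ι} (hij : x j ≤ x i) :
    signCorrelation f x j ≤ signCorrelation f x i := by
  refine mul_le_mul_of_nonneg_left ?_ (by positivity)
  rw [← sub_nonneg, ← sum_sub_distrib]
  simp only [← sub_mul]
  have hswap : Function.Bijective fun s : ι → Bool => s ∘ Equiv.swap i j :=
    (Equiv.swap i j).bijective.comp_right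
  exact sum_mul_map_nonneg_of_bijective hf hswap (sub_nonneg.2 hij) (fun s => by simp)
    fun s => dotProduct_sub_dotProduct_comp_swap x (boolSign ∘ s) i j

theorem signCorrelation_nonneg (hf : Monotone f) {j : ι} (hj : 0 ≤ x j) :
    0 ≤ signCorrelation f x j := by
  refine mul_nonneg (by positivity) ?_
  have hflip : Function.Involutive fun s : ι → Bool => Function.update s j (!s j) :=
    fun s => by simp
  refine sum_mul_map_nonneg_of_bijective hf hflip.bijective (mul_nonneg zero_le_two hj)
    (fun s => by rw [Function.update_self, boolSign_not]) fun s => ?_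
  rw [Function.comp_update, dotProduct_sub_dotProduct_update, boolSign_not, Function.comp_apply]
  ring

theorem alph_maps_Tcone_to_Tcone_general (hf : Monotone f) (x : ι → ℝ) :
    (∀ i j, x j ≤ x i → signCorrelation f x j ≤ signCorrelation f x i) ∧
      ∀ j, 0 ≤ x j → 0 ≤ signCorrelation f x j :=
  ⟨fun _ _ => signCorrelation_le_signCorrelation hf, fun _ => signCorrelation_nonneg hf⟩

end SignCorrelation

/-- `α` maps `T_n` into `T_n`: for `x ∈ T_n`, `α_1(x) ≥ α_2(x) ≥ … ≥ α_n(x) ≥ 0`. -/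
theorem alph_maps_Tcone_to_Tcone (n : ℕ) (x : Fin n → ℝ) (hx : x ∈ Tcone n) :
    (fun j => alph n x j) ∈ Tcone n := by
  rw [alph_eq_signCorrelation]
  obtain ⟨hle, hnonneg⟩ := alph_maps_Tcone_to_Tcone_general monotone_real_sign x
  exact ⟨fun i j hij => hle i j (hx.1 i j hij), fun j => hnonneg j (hx.2 j)⟩
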